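/- Let p be an odd prime such that the Diophantine equation 8x^2 + 27y^2 = jp has a primitive solution for some j ∈ {1, 4, 8}. Let r be the integer with 24r ≡ 1 (mod p) and 1 ≤ −r ≤ p−1. Then for every integer n ≥ 0 and every integer β with 0 ≤ β < p and 24pβ ≠ 11(p^2 + 24r − 1), one has b₂₁(4(p^2 n + βp − 11r) + 1) ≡ 0 (mod 2). -/

import Mathlib

/-- `b21 n` is the number of 21-regular partitions of `n`,
i.e. partitions of `n` none of whose parts is divisible by 21. -/
def b21 (n : ℕ) : ℕ :=
  (Finset.univ.filter fun c : n.Partition => ∀ i ∈ c.parts, ¬ (21 ∣ i)).card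

/-!
Power series are taken modulo 2. Let `θ c = ∑ q ^ ((x ^ 2 - 1) / c)`, so that `θ 24` is Euler's
product `f(q) = ∏ (1 - q ^ n)`. A product of two such series counts the representations of
numbers by a form `A x ^ 2 + B y ^ 2`. Modulo 2 that count is the number of representations that an
automorph of the form fixes up to signs, because the automorph pairs off the others. For
`x ^ 2 + 3 y ^ 2` and `7 x ^ 2 + y ^ 2` this yields the identities between theta series which turn
`∑ b21 n q ^ n = f(q ^ 21) / f(q) = f(q ^ 21) f(q) ^ 3 / f(q ^ 4)` into
`∑ b21 (4 m + 1) q ^ m = θ 3 (q) θ 24 (q ^ 3)`. Hence `b21 (4 m + 1)` has the parity of the number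
of solutions of `8 x ^ 2 + 3 y ^ 2 = 24 m + 11` in natural numbers with `3 ∤ y`.

A solution of `8 x ^ 2 + 27 y ^ 2 = j p` gives an element of norm one with denominator `p` and
hence an automorph of `8 x ^ 2 + 3 y ^ 2`. When `p` divides `24 m + 11` exactly once, it sends each
solution to an integral one for exactly one choice of the relative sign, preserves `3 ∤ y` and
fixes nothing, so the number of solutions is even.
-/

section Parity

open Finset

variable {α : Type*}

theorem natCast_card_eq_card_filter_self (U : Finset α) (R : α → α → Prop)
    [DecidablePred fun a ↦ R a a] (hsymm : ∀ a ∈ U, ∀ b ∈ U, R a b → R b a)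
    (hR : ∀ a ∈ U, ∃! b, b ∈ U ∧ R a b) :
    (#U : ZMod 2) = #{a ∈ U | R a a} := by
  have partner (a : α) (ha : a ∈ U) : ∃ b, (b ∈ U ∧ R a b) ∧ ∀ b', b' ∈ U ∧ R a b' → b' = b :=
    hR a ha
  choose f hf hfu using partner
  have hff (a : α) (ha : a ∈ U) : f (f a ha) (hf a ha).1 = a :=
    (hfu _ _ a ⟨ha, hsymm a ha _ (hf a ha).1 (hf a ha).2⟩).symm
  have hoff : (∑ a ∈ U with ¬ R a a, (1 : ZMod 2)) = 0 := by
    refine sum_involution (fun a ha ↦ f a (mem_filter.mp ha).1)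
      (fun _ _ ↦ CharTwo.add_self_eq_zero 1) ?_ ?_ (fun a _ ↦ hff a _)
    · intro a ha _ heq
      obtain ⟨haU, hne⟩ := mem_filter.mp ha
      exact hne (by simpa only [heq] using (hf a haU).2)
    · intro a ha
      obtain ⟨haU, hne⟩ := mem_filter.mp ha
      refine mem_filter.mpr ⟨(hf a haU).1, fun hself ↦ hne ?_⟩
      have hfix : f a haU = a := by rw [hfu _ (hf a haU).1 _ ⟨(hf a haU).1, hself⟩, hff]
      rwa [hfix] at hself
  rw [← card_filter_add_card_filter_not (fun a ↦ R a a), Nat.cast_add,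
    cast_card (U.filter fun a ↦ ¬ R a a), hoff, add_zero]

theorem card_eq_ite_of_subsingleton {U : Finset α} (hU : (U : Set α).Subsingleton) {P : Prop}
    [Decidable P] (hP : U.Nonempty ↔ P) : #U = if P then 1 else 0 := by
  split_ifs with h
  · exact le_antisymm (card_le_one.mpr fun a ha b hb ↦ hU ha hb) (hP.mpr h).card_pos
  · exact card_eq_zero.mpr (not_nonempty_iff_eq_empty.mp (h ∘ hP.mp))

end Parity

section Representations

open Finset

/-- The representations of `N` by the form `A x ^ 2 + B y ^ 2` with natural numbers `x`, `y`. They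
are sought in the box `x, y ≤ N`, which contains all of them when `A` and `B` are positive. -/
def reps (A B N : ℕ) : Finset (ℕ × ℕ) :=
  {z ∈ range (N + 1) ×ˢ range (N + 1) | A * z.1 ^ 2 + B * z.2 ^ 2 = N}

variable {A B N : ℕ}

theorem mem_reps (hA : 0 < A) (hB : 0 < B) {z : ℕ × ℕ} :
    z ∈ reps A B N ↔ A * z.1 ^ 2 + B * z.2 ^ 2 = N := by
  rw [reps, mem_filter, and_iff_right_iff_imp, mem_product, mem_range, mem_range]
  intro h
  have hx : z.1 ≤ A * z.1 ^ 2 := (Nat.le_self_pow two_ne_zero _).trans (Nat.le_mul_of_pos_left _ hA)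
  have hy : z.2 ≤ B * z.2 ^ 2 := (Nat.le_self_pow two_ne_zero _).trans (Nat.le_mul_of_pos_left _ hB)
  omega

/-- `Linked A B k c e z w` says that, up to the signs of the coordinates, `w` is the image of `z`
under the automorph of `A x ^ 2 + B y ^ 2` with coefficients `c / k` and `e / k`. With
`c ^ 2 + A B e ^ 2 = k ^ 2` this is the multiplication of `A x + √(-AB) y` by the number
`(c - e √(-AB)) / k` of norm one. -/
def Linked (A B k : ℕ) (c e : ℤ) (z w : ℕ × ℕ) : Prop :=
  ∃ x y X Y : ℤ, x.natAbs = z.1 ∧ y.natAbs = z.2 ∧ X.natAbs = w.1 ∧ Y.natAbs = w.2 ∧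
    k * X = c * x + B * e * y ∧ k * Y = c * y - A * e * x

namespace Linked

variable {k : ℕ} {c e : ℤ} {z w : ℕ × ℕ}

theorem iff_natAbs : Linked A B k c e z w ↔
    (k * w.1 = (c * z.1 + B * e * z.2).natAbs ∧ k * w.2 = (c * z.2 - A * e * z.1).natAbs) ∨
      (k * w.1 = (c * z.1 - B * e * z.2).natAbs ∧ k * w.2 = (c * z.2 + A * e * z.1).natAbs) := by
  have exists_lift {a : ℤ} {m : ℕ} (h : k * m = a.natAbs) : ∃ X : ℤ, X.natAbs = m ∧ k * X = a := by
    obtain ha | ha := Int.natAbs_eq a <;> rw [← h] at ha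
    · exact ⟨m, Int.natAbs_natCast m, by rw [ha, Nat.cast_mul]⟩
    · exact ⟨-m, by simp, by rw [ha, Nat.cast_mul, mul_neg]⟩
  constructor
  · rintro ⟨x, y, X, Y, hx, hy, hX, hY, h₁, h₂⟩
    have hw₁ : k * w.1 = (c * x + B * e * y).natAbs := by rw [← h₁, Int.natAbs_mul, hX]; rfl
    have hw₂ : k * w.2 = (c * y - A * e * x).natAbs := by rw [← h₂, Int.natAbs_mul, hY]; rfl
    rw [hw₁, hw₂, ← hx, ← hy]
    obtain hx | hx := Int.natAbs_eq x <;> obtain hy | hy := Int.natAbs_eq y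
    all_goals
      generalize x.natAbs = x' at *
      generalize y.natAbs = y' at *
      subst hx hy
      simp only [Int.natAbs_eq_natAbs_iff]
      grind
  · rintro (⟨h₁, h₂⟩ | ⟨h₁, h₂⟩)
    · obtain ⟨X, hX, hX'⟩ := exists_lift h₁
      obtain ⟨Y, hY, hY'⟩ := exists_lift h₂
      exact ⟨z.1, z.2, X, Y, rfl, rfl, hX, hY, hX', hY'⟩
    · obtain ⟨X, hX, hX'⟩ := exists_lift h₁
      obtain ⟨Y, hY, hY'⟩ := exists_lift h₂
      exact ⟨z.1, -z.2, X, -Y, rfl, by simp, hX, by simpa, by rw [hX']; ring, by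
        rw [mul_neg, hY']; ring⟩

theorem symm (hk : k ≠ 0) (hc : c ^ 2 + A * B * e ^ 2 = k ^ 2) (h : Linked A B k c e z w) :
    Linked A B k c e w z := by
  obtain ⟨x, y, X, Y, hx, hy, hX, hY, h₁, h₂⟩ := h
  have hk' : (k : ℤ) ≠ 0 := Nat.cast_ne_zero.mpr hk
  refine ⟨X, -Y, x, -y, hX, by rwa [Int.natAbs_neg], hx, by rwa [Int.natAbs_neg], ?_, ?_⟩
  · apply mul_left_cancel₀ hk'
    linear_combination -x * hc - c * h₁ + B * e * h₂
  · apply mul_left_cancel₀ hk'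
    linear_combination y * hc + c * h₂ + A * e * h₁

theorem form_eq (hk : k ≠ 0) (hc : c ^ 2 + A * B * e ^ 2 = k ^ 2) (h : Linked A B k c e z w) :
    A * w.1 ^ 2 + B * w.2 ^ 2 = A * z.1 ^ 2 + B * z.2 ^ 2 := by
  obtain ⟨x, y, X, Y, hx, hy, hX, hY, h₁, h₂⟩ := h
  rw [← hx, ← hy, ← hX, ← hY]
  zify
  simp only [sq_abs]
  apply mul_left_cancel₀ (pow_ne_zero 2 (Nat.cast_ne_zero.mpr hk : (k : ℤ) ≠ 0))
  linear_combination (A * x ^ 2 + B * y ^ 2) * hc + A * (k * X + c * x + B * e * y) * h₁ +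
    B * (k * Y + c * y - A * e * x) * h₂

end Linked

theorem natCast_card_reps_filter {k : ℕ} {c e : ℤ} (hA : 0 < A) (hB : 0 < B) (hk : k ≠ 0)
    (hc : c ^ 2 + A * B * e ^ 2 = k ^ 2) (Q : ℕ × ℕ → Prop) [DecidablePred Q]
    [DecidablePred fun z ↦ Linked A B k c e z z]
    (hQ : ∀ z, A * z.1 ^ 2 + B * z.2 ^ 2 = N → Q z → ∃! w, Q w ∧ Linked A B k c e z w) :
    (#{z ∈ reps A B N | Q z} : ZMod 2) = #{z ∈ reps A B N | Q z ∧ Linked A B k c e z z} := by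
  rw [← filter_filter]
  refine natCast_card_eq_card_filter_self _ _ (fun z _ w _ ↦ Linked.symm hk hc) fun z hz ↦ ?_
  simp only [mem_filter, mem_reps hA hB] at hz ⊢
  obtain ⟨w, ⟨hQw, hw⟩, huniq⟩ := hQ z hz.1 hz.2
  exact ⟨w, ⟨⟨(hw.form_eq hk hc).trans hz.1, hQw⟩, hw⟩, fun w' h ↦ huniq w' ⟨h.1.2, h.2⟩⟩

theorem existsUnique_linked_eisenstein {z : ℕ × ℕ} (h₁ : Odd z.1) (h₂ : Odd z.2) :
    ∃! w, (Odd w.1 ∧ Odd w.2) ∧ Linked 1 3 2 1 1 z w := by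
  obtain ⟨x, y⟩ := z
  simp only [Linked.iff_natAbs, Nat.odd_iff] at *
  push_cast
  by_cases h : (x + y) % 4 = 2
  · refine ⟨(((x : ℤ) - 3 * y).natAbs / 2, (x + y) / 2), ⟨by omega, by omega⟩, ?_⟩
    rintro ⟨X, Y⟩ h
    simp only [Prod.mk.injEq]
    omega
  · refine ⟨((x + 3 * y) / 2, ((x : ℤ) - y).natAbs / 2), ⟨by omega, by omega⟩, ?_⟩
    rintro ⟨X, Y⟩ h
    simp only [Prod.mk.injEq]
    omega

theorem subsingleton_of_subset_reps_of_line (hA : 0 < A) (hB : 0 < B) {U : Finset (ℕ × ℕ)}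
    (hU : U ⊆ reps A B N) {l m : ℕ} (hl : l ≠ 0) (hline : ∀ z ∈ U, l * z.1 = m * z.2) :
    (U : Set (ℕ × ℕ)).Subsingleton := by
  intro z hz w hw
  have hNz := (mem_reps hA hB).mp (hU hz)
  have hNw := (mem_reps hA hB).mp (hU hw)
  have hlz := hline z hz
  have hlw := hline w hw
  have hpos : 0 < A * m ^ 2 + B * l ^ 2 := by positivity
  have hsnd : z.2 ^ 2 = w.2 ^ 2 := by
    apply Nat.eq_of_mul_eq_mul_left hpos
    zify at *
    linear_combination l ^ 2 * (hNz - hNw) - A * (l * z.1 + m * z.2) * hlz +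
      A * (l * w.1 + m * w.2) * hlw
  have hsnd : z.2 = w.2 := Nat.pow_left_injective two_ne_zero hsnd
  exact Prod.ext (Nat.eq_of_mul_eq_mul_left hl.bot_lt (by rw [hlz, hlw, hsnd])) hsnd

theorem card_reps_odd_diagonal {M : ℕ} (hM : Odd M) [Decidable (IsSquare M)] :
    #{z ∈ reps 1 3 (4 * M) | (Odd z.1 ∧ Odd z.2) ∧ z.1 = z.2} = if IsSquare M then 1 else 0 := by
  refine card_eq_ite_of_subsingleton ?_ ⟨?_, ?_⟩
  · exact subsingleton_of_subset_reps_of_line one_pos three_pos (filter_subset _ _) one_ne_zero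
      fun z hz ↦ (one_mul _).trans ((mem_filter.mp hz).2.2.trans (one_mul _).symm)
  · rintro ⟨⟨x, y⟩, hz⟩
    simp only [mem_filter, mem_reps one_pos three_pos] at hz
    obtain ⟨hz, -, rfl⟩ := hz
    exact ⟨x, by linarith⟩
  · rintro ⟨x, rfl⟩
    have hx := (Nat.odd_mul.mp hM).1
    exact ⟨(x, x), mem_filter.mpr ⟨(mem_reps one_pos three_pos).mpr (by ring), ⟨hx, hx⟩, rfl⟩⟩

theorem card_reps_odd_triple {M : ℕ} (hM : Odd M) [Decidable (IsSquare (3 * M))] :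
    #{z ∈ reps 1 3 (4 * M) | (Odd z.1 ∧ Odd z.2) ∧ z.1 = 3 * z.2} =
      if IsSquare (3 * M) then 1 else 0 := by
  refine card_eq_ite_of_subsingleton ?_ ⟨?_, ?_⟩
  · exact subsingleton_of_subset_reps_of_line one_pos three_pos (filter_subset _ _) one_ne_zero
      fun z hz ↦ (one_mul _).trans (mem_filter.mp hz).2.2
  · rintro ⟨⟨x, y⟩, hz⟩
    simp only [mem_filter, mem_reps one_pos three_pos] at hz
    obtain ⟨hz, -, rfl⟩ := hz
    exact ⟨3 * y, by linarith⟩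
  · rintro ⟨x, hx⟩
    have hxo : Odd x := (Nat.odd_mul.mp (hx ▸ Odd.mul (by decide) hM)).1
    obtain ⟨y, rfl⟩ : 3 ∣ x := by simpa using Nat.prime_three.dvd_mul.mp (Dvd.intro _ hx)
    exact ⟨(3 * y, y), mem_filter.mpr
      ⟨(mem_reps one_pos three_pos).mpr (by linarith), ⟨hxo, (Nat.odd_mul.mp hxo).2⟩, rfl⟩⟩

/- Multiplication by the sixth roots of unity acts on the Eisenstein integers of norm `4 M`. -/
theorem natCast_card_reps_odd {M : ℕ} (hM : Odd M) [Decidable (IsSquare M)]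
    [Decidable (IsSquare (3 * M))] :
    (#{z ∈ reps 1 3 (4 * M) | Odd z.1 ∧ Odd z.2} : ZMod 2) =
      (if IsSquare M then 1 else 0) + if IsSquare (3 * M) then 1 else 0 := by
  classical
  have linked_self_iff (z : ℕ × ℕ) : Odd z.1 ∧ Odd z.2 ∧ Linked 1 3 2 1 1 z z ↔
      Odd z.1 ∧ Odd z.2 ∧ (z.1 = z.2 ∨ z.1 = 3 * z.2) := by
    simp only [Linked.iff_natAbs, Nat.odd_iff]
    push_cast
    omega
  rw [natCast_card_reps_filter one_pos three_pos two_ne_zero (by norm_num : (1 : ℤ) ^ 2 + _ = _) _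
    fun z _ hz ↦ existsUnique_linked_eisenstein hz.1 hz.2]
  simp only [and_assoc, linked_self_iff]
  simp only [← and_assoc, and_or_left, filter_or]
  rw [card_union_of_disjoint, card_reps_odd_diagonal hM, card_reps_odd_triple hM]
  · push_cast; rfl
  · rw [disjoint_filter]
    rintro z - ⟨⟨h₁, -⟩, h⟩ ⟨-, h'⟩
    rw [Nat.odd_iff] at h₁
    omega

theorem dvd_sub_or_dvd_add_of_seven {M x y : ℤ} (hM : Odd M) (hx : Odd x) (hy : Odd y)
    (h : 7 * x ^ 2 + y ^ 2 = 16 * M) : 16 ∣ y - 3 * x ∨ 16 ∣ y + 3 * x := by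
  obtain ⟨a, ha⟩ : Even (y - 3 * x) := hy.sub_odd (Odd.mul (by decide) hx)
  obtain ⟨k, hk⟩ : Even (M - x ^ 2) := hM.sub_odd hx.pow
  have hab : a * (a + 3 * x) = 8 * k := by
    apply mul_left_cancel₀ four_ne_zero
    linear_combination h + 16 * hk - (y + 3 * x + 2 * a) * ha
  have eight_dvd {u v : ℤ} (huv : u * v = 8 * k) (hu : Odd u) : 8 ∣ v := by
    have hcop : IsCoprime (2 ^ 3) u := (Int.isCoprime_two_left.mpr hu).pow_left
    exact hcop.dvd_of_dvd_mul_left (by rw [huv]; exact ⟨k, by norm_num⟩)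
  obtain ha' | ha' := Int.even_or_odd a
  · left
    have := eight_dvd (mul_comm a _ ▸ hab) (ha'.add_odd (Odd.mul (by decide) hx))
    omega
  · right
    have := eight_dvd hab ha'
    omega

theorem existsUnique_linked_seven {M : ℕ} (hM : Odd M) {z : ℕ × ℕ}
    (hz : 7 * z.1 ^ 2 + 1 * z.2 ^ 2 = 16 * M) (h₁ : Odd z.1) (h₂ : Odd z.2) (h₃ : ¬ 3 ∣ z.1) :
    ∃! w, ((Odd w.1 ∧ Odd w.2) ∧ ¬ 3 ∣ w.1) ∧ Linked 7 1 8 1 3 z w := by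
  obtain ⟨x, y⟩ := z
  have hdvd : (16 : ℤ) ∣ y - 3 * x ∨ (16 : ℤ) ∣ y + 3 * x :=
    dvd_sub_or_dvd_add_of_seven (M := M) (mod_cast hM) (mod_cast h₁) (mod_cast h₂)
      (mod_cast one_mul (y ^ 2) ▸ hz)
  clear hz
  simp only [Linked.iff_natAbs, Nat.odd_iff] at *
  push_cast
  obtain h | h := hdvd
  · refine ⟨(((x : ℤ) - 3 * y).natAbs / 8, (21 * x + y) / 8), ⟨by omega, by omega⟩, ?_⟩
    rintro ⟨X, Y⟩ hw
    simp only [Prod.mk.injEq]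
    omega
  · refine ⟨((x + 3 * y) / 8, ((y : ℤ) - 21 * x).natAbs / 8), ⟨by omega, by omega⟩, ?_⟩
    rintro ⟨X, Y⟩ hw
    simp only [Prod.mk.injEq]
    omega

/- Multiplication by `(1 - 3 √-7) / 8` acts on the elements of norm `16 M`. -/
theorem natCast_card_reps_seven {M : ℕ} (hM : Odd M) [Decidable (IsSquare M)] :
    (#{z ∈ reps 7 1 (16 * M) | (Odd z.1 ∧ Odd z.2) ∧ ¬ 3 ∣ z.1} : ZMod 2) =
      if IsSquare M ∧ ¬ 3 ∣ M then 1 else 0 := by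
  classical
  rw [natCast_card_reps_filter (by norm_num) one_pos (by norm_num)
    (by norm_num : (1 : ℤ) ^ 2 + _ = _) _
    fun z h hz ↦ existsUnique_linked_seven hM h hz.1.1 hz.1.2 hz.2]
  rw [card_eq_ite_of_subsingleton (P := IsSquare M ∧ ¬ 3 ∣ M) ?_ ⟨?_, ?_⟩]
  · exact Nat.cast_ite ..
  · refine subsingleton_of_subset_reps_of_line (by norm_num) one_pos (filter_subset _ _)
      three_ne_zero (m := 1) fun z hz ↦ ?_
    simp only [mem_filter, Linked.iff_natAbs] at hz
    push_cast at hz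
    omega
  · rintro ⟨⟨x, y⟩, hz⟩
    simp only [mem_filter, mem_reps (by norm_num : 0 < 7) one_pos, Linked.iff_natAbs] at hz
    push_cast at hz
    obtain rfl : y = 3 * x := by omega
    have hM : M = x * x := by linarith
    refine ⟨⟨x, hM⟩, ?_⟩
    simpa [hM, Nat.prime_three.dvd_mul] using hz.2.1.2
  · rintro ⟨⟨x, rfl⟩, hx⟩
    have hxo := (Nat.odd_mul.mp hM).1
    refine ⟨(x, 3 * x), mem_filter.mpr ⟨(mem_reps (by norm_num) one_pos).mpr (by ring),
      ⟨⟨hxo, Odd.mul (by decide) hxo⟩, (hx <| ·.mul_right x)⟩, Linked.iff_natAbs.mpr ?_⟩⟩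
    push_cast
    omega

section Prime

variable {p : ℕ} {c e : ℤ}

theorem not_dvd_of_sq_add_eq_sq (hp : p.Prime) (hc : c ^ 2 + A * B * e ^ 2 = p ^ 2)
    (hAB : ¬ p ∣ A * B) (he : ¬ (p : ℤ) ∣ e) : ¬ (p : ℤ) ∣ c := by
  intro hpc
  have hp' := Nat.prime_iff_prime_int.mp hp
  have h : (p : ℤ) ∣ (A * B : ℕ) * e ^ 2 := by
    have := dvd_sub (dvd_pow_self (p : ℤ) two_ne_zero) (dvd_pow hpc two_ne_zero)
    rwa [← hc, add_sub_cancel_left, ← Nat.cast_mul] at this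
  obtain h | h := hp'.dvd_or_dvd h
  · exact hAB (mod_cast h)
  · exact he (hp'.dvd_of_dvd_pow h)

theorem dvd_add_or_dvd_sub (hp : p.Prime) (hc : c ^ 2 + A * B * e ^ 2 = p ^ 2) {x y : ℤ}
    (hN : (p : ℤ) ∣ A * x ^ 2 + B * y ^ 2) :
    (p : ℤ) ∣ c * x + B * e * y ∨ (p : ℤ) ∣ c * x - B * e * y := by
  refine (Nat.prime_iff_prime_int.mp hp).dvd_or_dvd ?_
  have h : (c * x + B * e * y) * (c * x - B * e * y) =
      p * (p * x ^ 2) - B * e ^ 2 * (A * x ^ 2 + B * y ^ 2) := by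
    linear_combination x ^ 2 * hc
  rw [h]
  exact dvd_sub (dvd_mul_right _ _) (hN.mul_left _)

theorem not_dvd_add_and_dvd_sub (hp : p.Prime) (hp2 : p ≠ 2) (hB : ¬ p ∣ B)
    (hpc : ¬ (p : ℤ) ∣ c) (hpe : ¬ (p : ℤ) ∣ e) {x y : ℤ}
    (hN : ¬ (p : ℤ) ^ 2 ∣ A * x ^ 2 + B * y ^ 2) :
    ¬ ((p : ℤ) ∣ c * x + B * e * y ∧ (p : ℤ) ∣ c * x - B * e * y) := by
  rintro ⟨hadd, hsub⟩
  have hp' := Nat.prime_iff_prime_int.mp hp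
  have hp2' : ¬ (p : ℤ) ∣ 2 := fun h ↦
    hp2 ((Nat.prime_dvd_prime_iff_eq hp Nat.prime_two).mp (mod_cast h))
  have hx : (p : ℤ) ∣ x := by
    have h : (p : ℤ) ∣ 2 * c * x := (dvd_add hadd hsub).trans (by ring_nf; rfl)
    simpa [hp'.dvd_mul, hp2', hpc] using h
  have hy : (p : ℤ) ∣ y := by
    have h : (p : ℤ) ∣ B * e * y := (dvd_add_right (hx.mul_left c)).mp hadd
    simpa [hp'.dvd_mul, hpe, Int.natCast_dvd_natCast, hB] using h
  exact hN (dvd_add ((pow_dvd_pow_of_dvd hx 2).mul_left _) ((pow_dvd_pow_of_dvd hy 2).mul_left _))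

theorem dvd_conj_of_dvd (hp : p.Prime) (hc : c ^ 2 + A * B * e ^ 2 = p ^ 2)
    (hpc : ¬ (p : ℤ) ∣ c) {x y : ℤ} (h : (p : ℤ) ∣ c * x + B * e * y) :
    (p : ℤ) ∣ c * y - A * e * x := by
  refine ((Nat.prime_iff_prime_int.mp hp).dvd_or_dvd ?_).resolve_left hpc
  have h' : c * (c * y - A * e * x) = p * (p * y) - A * e * (c * x + B * e * y) := by
    linear_combination y * hc
  rw [h']
  exact dvd_sub (dvd_mul_right _ _) (h.mul_left _)

theorem existsUnique_linked_prime (hp : p.Prime) (hp2 : p ≠ 2) (hAB : ¬ p ∣ A * B)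
    (hc : c ^ 2 + A * B * e ^ 2 = p ^ 2) (hpe : ¬ (p : ℤ) ∣ e) (hN : p ∣ N) (hN' : ¬ p ^ 2 ∣ N)
    {z : ℕ × ℕ} (hz : A * z.1 ^ 2 + B * z.2 ^ 2 = N) : ∃! w, Linked A B p c e z w := by
  have hpc := not_dvd_of_sq_add_eq_sq hp hc hAB hpe
  have hnot := not_dvd_add_and_dvd_sub hp hp2 (hAB <| ·.mul_left A) hpc hpe
    (A := A) (x := z.1) (y := z.2) (mod_cast hz ▸ hN')
  have eq_natAbs {m : ℕ} {a X : ℤ} (ha : a = p * X) (h : p * m = a.natAbs) : m = X.natAbs := by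
    rw [ha, Int.natAbs_mul, Int.natAbs_natCast] at h
    exact Nat.eq_of_mul_eq_mul_left hp.pos h
  have dvd_of_natAbs {m : ℕ} {a : ℤ} (h : p * m = a.natAbs) : (p : ℤ) ∣ a :=
    Int.natCast_dvd.mpr ⟨m, h.symm⟩
  rw [← hz] at hN
  obtain ⟨X, hX⟩ | ⟨X, hX⟩ := dvd_add_or_dvd_sub hp hc (x := z.1) (y := z.2) (mod_cast hN)
  · obtain ⟨Y, hY⟩ := dvd_conj_of_dvd hp hc hpc ⟨X, hX⟩
    refine ⟨(X.natAbs, Y.natAbs), ⟨z.1, z.2, X, Y, rfl, rfl, rfl, rfl, hX.symm, hY.symm⟩, ?_⟩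
    intro w hw
    obtain ⟨h₁, h₂⟩ | ⟨h₁, -⟩ := Linked.iff_natAbs.mp hw
    · exact Prod.ext (eq_natAbs hX h₁) (eq_natAbs hY h₂)
    · exact absurd ⟨⟨X, hX⟩, dvd_of_natAbs h₁⟩ hnot
  · obtain ⟨Y, hY⟩ := dvd_conj_of_dvd hp hc hpc (x := z.1) (y := -z.2)
      ⟨X, by rw [← hX]; ring⟩
    refine ⟨(X.natAbs, Y.natAbs), ⟨z.1, -z.2, X, Y, rfl, by simp, rfl, rfl, ?_, hY.symm⟩, ?_⟩
    · rw [← hX]; ring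
    intro w hw
    obtain ⟨h₁, -⟩ | ⟨h₁, h₂⟩ := Linked.iff_natAbs.mp hw
    · exact absurd ⟨dvd_of_natAbs h₁, ⟨X, hX⟩⟩ hnot
    · refine Prod.ext (eq_natAbs hX h₁) (eq_natAbs hY (h₂.trans ?_))
      rw [← Int.natAbs_neg]
      congr 1
      ring

theorem natAbs_eq_of_linked_self {k : ℕ} {z : ℕ × ℕ} (h : Linked A B k c e z z)
    {q : ℕ} (hq : q.Prime) (hq2 : q ≠ 2) (hqB : q ∣ B) (hqe : (q : ℤ) ∣ e) (hqk : ¬ q ∣ k)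
    (hy : ¬ q ∣ z.2) (hN : ¬ q ∣ A * z.1 ^ 2 + B * z.2 ^ 2) : c.natAbs = k := by
  have hq' := Nat.prime_iff_prime_int.mp hq
  have hq2' : ¬ (q : ℤ) ∣ 2 := fun h ↦
    hq2 ((Nat.prime_dvd_prime_iff_eq hq Nat.prime_two).mp (mod_cast h))
  obtain ⟨x, y, X, Y, hx, hy', hX, hY, h₁, h₂⟩ := h
  rw [← hy', ← Int.natCast_dvd] at hy
  rw [← hx] at hX
  rw [← hy'] at hY
  have hN' : ¬ (q : ℤ) ∣ A * x ^ 2 + B * y ^ 2 := by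
    rw [← hx, ← hy'] at hN
    zify at hN
    simpa only [sq_abs] using hN
  have hN0 : A * x ^ 2 + B * y ^ 2 ≠ 0 := fun h ↦ hN' (h ▸ dvd_zero _)
  have opposite_signs {u v : ℤ} (huv : u + v = 2 * k) (hu : (q : ℤ) ∣ u * x)
      (hv : (q : ℤ) ∣ v * y) : False := by
    have hv : (q : ℤ) ∣ v := (hq'.dvd_or_dvd hv).resolve_right hy
    have hu' : ¬ (q : ℤ) ∣ u := by
      rw [← dvd_add_left hv, huv, hq'.dvd_mul, Int.natCast_dvd_natCast]
      tauto
    have hx : (q : ℤ) ∣ x := (hq'.dvd_or_dvd hu).resolve_left hu'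
    exact hN' (dvd_add ((dvd_pow hx two_ne_zero).mul_left _)
      ((Int.natCast_dvd_natCast.mpr hqB).mul_right _))
  obtain rfl | rfl := Int.natAbs_eq_natAbs_iff.mp hX <;>
    obtain rfl | rfl := Int.natAbs_eq_natAbs_iff.mp hY
  · have h : c = k := mul_right_cancel₀ hN0 (by linear_combination -A * X * h₁ - B * Y * h₂)
    rw [h, Int.natAbs_natCast]
  · exact (opposite_signs (u := k - c) (v := k + c) (by ring)
      (hqe.trans ⟨B * y, by linear_combination h₁⟩)
      (hqe.trans ⟨A * X, by linear_combination -h₂⟩)).elim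
  · exact (opposite_signs (u := k + c) (v := k - c) (by ring)
      (hqe.trans ⟨-B * Y, by linear_combination -h₁⟩)
      (hqe.trans ⟨-A * x, by linear_combination h₂⟩)).elim
  · have h : c = -k := mul_right_cancel₀ hN0 (by linear_combination -A * x * h₁ - B * y * h₂)
    rw [h, Int.natAbs_neg, Int.natAbs_natCast]

theorem Linked.not_dvd_snd {k : ℕ} {z w : ℕ × ℕ} (h : Linked A B k c e z w) {q : ℕ} (hq : q.Prime)
    (hqe : (q : ℤ) ∣ e) (hqc : ¬ (q : ℤ) ∣ c) (hz : ¬ q ∣ z.2) : ¬ q ∣ w.2 := by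
  obtain ⟨x, y, X, Y, -, hy, -, hY, -, h₂⟩ := h
  rw [← hy, ← Int.natCast_dvd] at hz
  rw [← hY, ← Int.natCast_dvd]
  intro hqY
  have h : (q : ℤ) ∣ c * y := by
    rw [← dvd_sub_left ((hqe.mul_left A).mul_right x), ← h₂]
    exact hqY.mul_left _
  exact ((Nat.prime_iff_prime_int.mp hq).dvd_or_dvd h).elim hqc hz

theorem even_card_reps (hA : 0 < A) (hB : 0 < B) (hp : p.Prime) (hp2 : p ≠ 2) (hAB : ¬ p ∣ A * B)
    (hc : c ^ 2 + A * B * e ^ 2 = p ^ 2) (hpe : ¬ (p : ℤ) ∣ e) (hN : p ∣ N) (hN' : ¬ p ^ 2 ∣ N)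
    {q : ℕ} (hq : q.Prime) (hq2 : q ≠ 2) (hqB : q ∣ B) (hqe : (q : ℤ) ∣ e) (hqp : q ≠ p)
    (hqN : ¬ q ∣ N) : Even #{z ∈ reps A B N | ¬ q ∣ z.2} := by
  classical
  have hqp' : ¬ q ∣ p := mt (Nat.prime_dvd_prime_iff_eq hq hp).mp hqp
  have hq' := Nat.prime_iff_prime_int.mp hq
  have hqc : ¬ (q : ℤ) ∣ c := fun hqc ↦ hqp' <| Int.natCast_dvd_natCast.mp <|
    hq'.dvd_of_dvd_pow (n := 2) <| hc ▸ dvd_add (dvd_pow hqc two_ne_zero)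
      ((dvd_pow hqe two_ne_zero).mul_left _)
  rw [← ZMod.natCast_eq_zero_iff_even, natCast_card_reps_filter hA hB hp.ne_zero hc,
    filter_eq_empty_iff.mpr, card_empty, Nat.cast_zero]
  · rintro z hz ⟨hqz, hself⟩
    rw [mem_reps hA hB] at hz
    have hcp : c ^ 2 = p ^ 2 := by
      rw [← natAbs_eq_of_linked_self hself hq hq2 hqB hqe hqp' hqz (hz ▸ hqN), Int.natCast_natAbs,
        sq_abs]
    have he : (A * B : ℤ) * e ^ 2 = 0 := by linear_combination hc - hcp
    have : e = 0 := by simpa [hA.ne', hB.ne'] using he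
    exact hpe (this ▸ dvd_zero _)
  · intro z hz hqz
    obtain ⟨w, hw, huniq⟩ := existsUnique_linked_prime hp hp2 hAB hc hpe hN hN' hz
    exact ⟨w, ⟨hw.not_dvd_snd hq hqe hqc hqz, hw⟩, fun w' hw' ↦ huniq w' hw'.2⟩

end Prime

end Representations

section Solutions

theorem four_dvd_of_eight_dvd_sq {y : ℤ} (h : 8 ∣ y ^ 2) : 4 ∣ y := by
  obtain ⟨z, rfl⟩ : 2 ∣ y := Int.prime_two.dvd_of_dvd_pow (dvd_trans (by norm_num) h)
  have hz : 2 ∣ z ^ 2 := by rw [mul_pow] at h; omega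
  obtain ⟨w, rfl⟩ := Int.prime_two.dvd_of_dvd_pow hz
  exact ⟨w, by ring⟩

theorem dvd_sub_and_dvd_mul_of_eq {p j x y : ℤ} (hj : j ∈ ({1, 4, 8} : Set ℤ))
    (h : 8 * x ^ 2 + 27 * y ^ 2 = j * p) :
    j ∣ 8 * x ^ 2 - 27 * y ^ 2 ∧ 3 * j ∣ 6 * x * y := by
  have hsub : j ∣ 54 * y ^ 2 → j ∣ 8 * x ^ 2 - 27 * y ^ 2 := fun hy ↦ by
    have := dvd_sub (Dvd.intro _ h.symm) hy
    rwa [show 8 * x ^ 2 + 27 * y ^ 2 - 54 * y ^ 2 = 8 * x ^ 2 - 27 * y ^ 2 by ring] at this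
  obtain rfl | rfl | rfl := hj
  · exact ⟨one_dvd _, ⟨2 * x * y, by ring⟩⟩
  · obtain ⟨z, rfl⟩ : 2 ∣ y := Int.prime_two.dvd_of_dvd_pow (n := 2) (by omega)
    exact ⟨hsub ⟨54 * z ^ 2, by ring⟩, ⟨x * z, by ring⟩⟩
  · obtain ⟨w, rfl⟩ := four_dvd_of_eight_dvd_sq (y := y) (by omega)
    exact ⟨hsub ⟨108 * w ^ 2, by ring⟩, ⟨x * w, by ring⟩⟩

theorem not_dvd_of_isCoprime {p x y : ℤ} (hp : Prime p) {a b n : ℤ} (hpb : ¬ p ∣ b)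
    (h : a * x ^ 2 + b * y ^ 2 = n) (hn : p ∣ n) (hxy : IsCoprime x y) : ¬ p ∣ x := by
  intro hx
  rw [← h, dvd_add_right ((dvd_pow hx two_ne_zero).mul_left a)] at hn
  exact hp.not_isUnit (hxy.isUnit_of_dvd' hx
    (hp.dvd_of_dvd_pow ((hp.dvd_or_dvd hn).resolve_left hpb)))

/- If `α = √8 x + √-27 y` has norm `j p`, then `α / conj α = α ^ 2 / (j p)` has norm one. -/
theorem exists_sq_add_eq_sq {p : ℕ} (hp : p.Prime) (h24 : ¬ p ∣ 24)
    (hsol : ∃ j ∈ ({1, 4, 8} : Set ℤ), ∃ x y : ℤ,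
      8 * x ^ 2 + 27 * y ^ 2 = j * p ∧ Int.gcd x y = 1) :
    ∃ c e : ℤ, c ^ 2 + 24 * e ^ 2 = p ^ 2 ∧ 3 ∣ e ∧ ¬ (p : ℤ) ∣ e := by
  obtain ⟨j, hj, x, y, hxy, hgcd⟩ := hsol
  have hp' := Nat.prime_iff_prime_int.mp hp
  have hp2' : ¬ (p : ℤ) ∣ 2 := fun h ↦ h24 (mod_cast h.trans (by norm_num : (2 : ℤ) ∣ 24))
  have hp3' : ¬ (p : ℤ) ∣ 3 := fun h ↦ h24 (mod_cast h.trans (by norm_num : (3 : ℤ) ∣ 24))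
  have hcop : IsCoprime x y := Int.isCoprime_iff_gcd_eq_one.mpr hgcd
  have hx : ¬ (p : ℤ) ∣ x := not_dvd_of_isCoprime hp' (mt (hp'.dvd_of_dvd_pow (n := 3)) hp3') hxy
    (dvd_mul_left _ _) hcop
  have hy : ¬ (p : ℤ) ∣ y := not_dvd_of_isCoprime hp' (mt (hp'.dvd_of_dvd_pow (n := 3)) hp2')
    ((add_comm _ _).trans hxy) (dvd_mul_left _ _) hcop.symm
  obtain ⟨⟨c, hc⟩, ⟨e, he⟩⟩ := dvd_sub_and_dvd_mul_of_eq hj hxy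
  have hj0 : j ≠ 0 := by
    rintro rfl
    norm_num at hj
  refine ⟨c, 3 * e, ?_, dvd_mul_right _ _, fun hpe ↦ ?_⟩
  · apply mul_left_cancel₀ (pow_ne_zero 2 hj0)
    linear_combination (8 * x ^ 2 + 27 * y ^ 2 + j * p) * hxy -
      (8 * x ^ 2 - 27 * y ^ 2 + j * c) * hc - 24 * (6 * x * y + 3 * j * e) * he
  · have h : (p : ℤ) ∣ 2 * 3 * x * y := by
      rw [show 2 * 3 * x * y = j * (3 * e) by linear_combination he]
      exact hpe.mul_left j
    simp only [hp'.dvd_mul, hp2', hp3', hx, hy, or_self] at h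

end Solutions

section PowerSeries

open Finset PowerSeries Nat.Partition
open scoped PowerSeries.WithPiTopology

variable {R : Type*} [CommRing R]

theorem continuous_expand [TopologicalSpace R] (k : ℕ) (hk : k ≠ 0) :
    Continuous (expand k hk : R⟦X⟧ →ₐ[R] R⟦X⟧) := by
  refine continuous_iff_continuousAt.mpr fun φ ↦
    (PowerSeries.WithPiTopology.tendsto_iff_coeff_tendsto ..).mpr fun d ↦ ?_
  simp only [coeff_expand]
  split_ifs
  · exact (PowerSeries.WithPiTopology.continuous_coeff R _).tendsto φ
  · exact tendsto_const_nhds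

theorem mk_card_restricted_mul_pentagonalSeries {m : ℕ} (hm : m ≠ 0) :
    mk (fun n ↦ (#(restricted n (¬ m ∣ ·)) : R)) * pentagonalSeries R =
      expand m hm (pentagonalSeries R) := by
  let _ : TopologicalSpace R := ⊥
  have _ : DiscreteTopology R := ⟨rfl⟩
  have hleft := (hasProd_powerSeriesMk_card_countRestricted R (Nat.pos_of_ne_zero hm)).mul
    (WithPiTopology.hasProd_one_sub_X_pow R)
  have hright := (WithPiTopology.hasProd_one_sub_X_pow R).map (expand m hm)
    (continuous_expand m hm)
  have hfactor (i : ℕ) : (∑ j ∈ range m, (X : R⟦X⟧) ^ ((i + 1) * j)) * (1 - X ^ (i + 1)) =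
      expand m hm (1 - X ^ (i + 1)) := by
    simp only [pow_mul, geom_sum_mul_neg, map_sub, map_one, map_pow, expand_X]
    rw [pow_right_comm]
  simp only [card_restricted_eq_card_countRestricted _ (Nat.pos_of_ne_zero hm)]
  exact hleft.unique (by simpa only [hfactor, Function.comp_def] using hright)

theorem coeff_mul_expand {k j : ℕ} (hk : k ≠ 0) (hj : j < k) (φ ψ : R⟦X⟧) (n : ℕ) :
    coeff (k * n + j) (φ * expand k hk ψ) =
      coeff n (mk (fun m ↦ coeff (k * m + j) φ) * ψ) := by
  simp only [coeff_mul, coeff_mk]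
  symm
  refine sum_of_injOn (fun a ↦ (k * a.1 + j, k * a.2)) ?_ ?_ ?_ ?_
  · rintro ⟨a, b⟩ - ⟨a', b'⟩ - h
    simpa [hk] using h
  · rintro ⟨a, b⟩ hab
    simp only [mem_coe, HasAntidiagonal.mem_antidiagonal] at hab ⊢
    rw [← hab]
    ring
  · rintro ⟨a, b⟩ hab hne
    rw [HasAntidiagonal.mem_antidiagonal] at hab
    rw [coeff_expand_of_not_dvd, mul_zero]
    rintro ⟨b', rfl⟩
    have hb' : b' < n + 1 := lt_of_mul_lt_mul_left (a := k) (by rw [mul_add]; omega) (Nat.zero_le k)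
    obtain ⟨a', rfl⟩ := Nat.exists_eq_add_of_le' (Nat.le_of_lt_succ hb')
    refine hne ⟨(a', b'), by simp, Prod.ext ?_ rfl⟩
    dsimp only
    linarith
  · rintro ⟨a, b⟩ -
    rw [coeff_expand_mul]

theorem expand_prime_pow (p : ℕ) [hp : Fact p.Prime] (k : ℕ) (φ : (ZMod p)⟦X⟧) :
    expand (p ^ k) (pow_ne_zero k hp.out.ne_zero) φ = φ ^ p ^ k := by
  have h := MvPowerSeries.map_iterateFrobenius_expand p hp.out.ne_zero φ k
  have hid : iterateFrobenius (ZMod p) p k = RingHom.id _ := by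
    ext x
    rw [iterateFrobenius_def, ZMod.pow_card_pow, RingHom.id_apply]
  rw [← h, hid, MvPowerSeries.map_id]
  rfl

end PowerSeries

section Theta

open Finset PowerSeries

/-- The series `∑ q ^ ((x ^ 2 - 1) / c)` modulo 2, over the natural numbers `x` such that
`x ^ 2 - 1` is a natural multiple of `c`. For `c = 24` this is the reduction of Euler's product
`∏ (1 - q ^ n)`, and for `c = 8` that of `∏ (1 - q ^ n) ^ 3`. -/
noncomputable def theta (c : ℕ) : (ZMod 2)⟦X⟧ :=
  mk fun n ↦ if IsSquare (c * n + 1) then 1 else 0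

theorem coeff_theta (c n : ℕ) : coeff n (theta c) = if IsSquare (c * n + 1) then 1 else 0 :=
  coeff_mk _ _

theorem constantCoeff_theta (c : ℕ) : constantCoeff (theta c) = 1 := by
  rw [← coeff_zero_eq_constantCoeff_apply, coeff_theta, mul_zero, zero_add, if_pos IsSquare.one]

theorem theta_ne_zero (c : ℕ) : theta c ≠ 0 := fun h ↦ by
  simpa [h] using constantCoeff_theta c

theorem expand_four (φ : (ZMod 2)⟦X⟧) : expand 4 four_ne_zero φ = φ ^ 4 :=
  expand_prime_pow 2 2 φ

theorem expand_eight (φ : (ZMod 2)⟦X⟧) : expand 8 (by norm_num) φ = φ ^ 8 :=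
  expand_prime_pow 2 3 φ

theorem coeff_expand_theta {k : ℕ} (hk : k ≠ 0) (c n : ℕ) {P : Prop} [Decidable P]
    (hP : P ↔ ∃ a, k * a = n ∧ IsSquare (c * a + 1)) :
    coeff n (expand k hk (theta c)) = if P then 1 else 0 := by
  rw [coeff_expand]
  split_ifs with hkn h h
  · obtain ⟨a, rfl, ha⟩ := hP.mp h
    rw [Nat.mul_div_cancel_left _ hk.bot_lt, coeff_theta, if_pos ha]
  · obtain ⟨a, rfl⟩ := hkn
    rw [Nat.mul_div_cancel_left _ hk.bot_lt, coeff_theta, if_neg fun ha ↦ h (hP.mpr ⟨a, rfl, ha⟩)]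
  · obtain ⟨a, rfl, -⟩ := hP.mp h
    exact absurd (dvd_mul_right k a) hkn
  · rfl

theorem coeff_X_mul_expand_theta {k : ℕ} (hk : k ≠ 0) (c n : ℕ) {P : Prop} [Decidable P]
    (hP : P ↔ ∃ a, k * a + 1 = n ∧ IsSquare (c * a + 1)) :
    coeff n (X * expand k hk (theta c)) = if P then 1 else 0 := by
  obtain - | n := n
  · rw [coeff_zero_X_mul, if_neg (by simp [hP])]
  · rw [coeff_succ_X_mul, coeff_expand_theta hk c n (by simpa using hP)]

theorem mem_reps_filter_modEq_one {A B c d k l s : ℕ} (hA : 0 < A) (hB : 0 < B) (hs : 0 < s)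
    (hc : 1 < c) (hd : 1 < d) (hAc : A * c = s * k) (hBd : B * d = s * l) {n : ℕ} {z : ℕ × ℕ} :
    z ∈ {z ∈ reps A B (s * n + A + B) | z.1 ^ 2 ≡ 1 [MOD c] ∧ z.2 ^ 2 ≡ 1 [MOD d]} ↔
      ∃ a b, k * a + l * b = n ∧ z.1 ^ 2 = c * a + 1 ∧ z.2 ^ 2 = d * b + 1 := by
  have exists_eq {c x : ℕ} (hc : 1 < c) (h : x ^ 2 ≡ 1 [MOD c]) : ∃ a, x ^ 2 = c * a + 1 := by
    rw [Nat.ModEq, Nat.mod_eq_of_lt hc] at h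
    exact ⟨x ^ 2 / c, by rw [← h, Nat.div_add_mod]⟩
  rw [mem_filter, mem_reps hA hB]
  constructor
  · rintro ⟨hz, hx, hy⟩
    obtain ⟨a, ha⟩ := exists_eq hc hx
    obtain ⟨b, hb⟩ := exists_eq hd hy
    refine ⟨a, b, Nat.eq_of_mul_eq_mul_left hs ?_, ha, hb⟩
    rw [ha, hb] at hz
    zify at *
    linear_combination hz - a * hAc - b * hBd
  · rintro ⟨a, b, rfl, ha, hb⟩
    refine ⟨?_, ?_, ?_⟩
    · rw [ha, hb]
      zify at *
      linear_combination a * hAc + b * hBd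
    · simp [ha, Nat.ModEq]
    · simp [hb, Nat.ModEq]

theorem coeff_expand_theta_mul_expand_theta {A B c d k l s : ℕ} (hA : 0 < A) (hB : 0 < B)
    (hs : 0 < s) (hc : 1 < c) (hd : 1 < d) (hk : k ≠ 0) (hl : l ≠ 0) (hAc : A * c = s * k)
    (hBd : B * d = s * l) (n : ℕ) :
    coeff n (expand k hk (theta c) * expand l hl (theta d)) =
      #{z ∈ reps A B (s * n + A + B) | z.1 ^ 2 ≡ 1 [MOD c] ∧ z.2 ^ 2 ≡ 1 [MOD d]} := by
  classical
  simp only [coeff_mul, coeff_expand_theta _ _ _ Iff.rfl, ite_zero_mul_ite_zero, mul_one, sum_boole]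
  congr 1
  symm
  have div_eq {c a x : ℕ} (hc : 1 < c) (hx : x ^ 2 = c * a + 1) : (x ^ 2 - 1) / c = a := by
    rw [hx, Nat.add_sub_cancel, Nat.mul_div_cancel_left a (zero_lt_one.trans hc)]
  refine card_bij (fun z _ ↦ (k * ((z.1 ^ 2 - 1) / c), l * ((z.2 ^ 2 - 1) / d))) ?_ ?_ ?_
  · intro z hz
    obtain ⟨a, b, hab, ha, hb⟩ := (mem_reps_filter_modEq_one hA hB hs hc hd hAc hBd).mp hz
    rw [mem_filter, HasAntidiagonal.mem_antidiagonal, div_eq hc ha, div_eq hd hb]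
    exact ⟨hab, ⟨a, rfl, z.1, by rw [← sq, ha]⟩, ⟨b, rfl, z.2, by rw [← sq, hb]⟩⟩
  · intro z hz w hw h
    obtain ⟨a, b, -, ha, hb⟩ := (mem_reps_filter_modEq_one hA hB hs hc hd hAc hBd).mp hz
    obtain ⟨a', b', -, ha', hb'⟩ := (mem_reps_filter_modEq_one hA hB hs hc hd hAc hBd).mp hw
    rw [div_eq hc ha, div_eq hd hb, div_eq hc ha', div_eq hd hb', Prod.mk.injEq,
      Nat.mul_right_inj hk, Nat.mul_right_inj hl] at h
    obtain ⟨rfl, rfl⟩ := h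
    exact Prod.ext (Nat.pow_left_injective two_ne_zero (ha.trans ha'.symm))
      (Nat.pow_left_injective two_ne_zero (hb.trans hb'.symm))
  · rintro ⟨i, j⟩ hij
    rw [mem_filter, HasAntidiagonal.mem_antidiagonal] at hij
    obtain ⟨hn, ⟨a, rfl, x, hx⟩, ⟨b, rfl, y, hy⟩⟩ := hij
    rw [← sq] at hx hy
    exact ⟨(x, y), (mem_reps_filter_modEq_one hA hB hs hc hd hAc hBd).mpr
      ⟨a, b, hn, hx.symm, hy.symm⟩, by rw [div_eq hc hx.symm, div_eq hd hy.symm]⟩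

theorem sq_modEq_one_eight_iff {x : ℕ} : x ^ 2 ≡ 1 [MOD 8] ↔ Odd x := by
  have hx : x % 8 < 8 := Nat.mod_lt _ (by norm_num)
  rw [Nat.odd_iff, ← Nat.mod_mod_of_dvd x (by norm_num : 2 ∣ 8), Nat.ModEq, Nat.pow_mod]
  interval_cases x % 8 <;> decide

theorem sq_modEq_one_three_iff {x : ℕ} : x ^ 2 ≡ 1 [MOD 3] ↔ ¬ 3 ∣ x := by
  have hx : x % 3 < 3 := Nat.mod_lt _ (by norm_num)
  rw [Nat.dvd_iff_mod_eq_zero, Nat.ModEq, Nat.pow_mod]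
  interval_cases x % 3 <;> decide

theorem sq_modEq_one_twentyFour_iff {x : ℕ} : x ^ 2 ≡ 1 [MOD 24] ↔ Odd x ∧ ¬ 3 ∣ x := by
  rw [← sq_modEq_one_eight_iff, ← sq_modEq_one_three_iff]
  exact (Nat.modEq_and_modEq_iff_modEq_mul (by norm_num : Nat.Coprime 8 3)).symm

theorem mod_eight_eq_one_of_isSquare {m : ℕ} (hm : IsSquare m) (hodd : Odd m) : m % 8 = 1 := by
  obtain ⟨x, rfl⟩ := hm
  rw [← sq]
  exact sq_modEq_one_eight_iff.mpr (Nat.odd_mul.mp hodd).1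

theorem isSquare_mul_add_one_iff {c k n : ℕ} (hk : 8 ∣ c * n → k ∣ n) (hodd : Odd (c * n + 1)) :
    IsSquare (c * n + 1) ↔ ∃ a, k * a = n ∧ IsSquare (c * k * a + 1) := by
  constructor
  · intro h
    have h8 := mod_eight_eq_one_of_isSquare h hodd
    obtain ⟨a, rfl⟩ := hk (by omega)
    exact ⟨a, rfl, by rwa [mul_assoc]⟩
  · rintro ⟨a, rfl, h⟩
    rwa [← mul_assoc]

theorem isSquare_prime_mul_iff {p : ℕ} (hp : p.Prime) {m : ℕ} :
    IsSquare (p * m) ↔ ∃ b, m = p * b ∧ IsSquare b := by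
  constructor
  · rintro ⟨x, hx⟩
    obtain ⟨y, rfl⟩ : p ∣ x := by simpa using hp.dvd_mul.mp (Dvd.intro _ hx)
    refine ⟨y * y, Nat.eq_of_mul_eq_mul_left hp.pos ?_, y, rfl⟩
    linarith
  · rintro ⟨b, rfl, y, rfl⟩
    exact ⟨p * y, by ring⟩

theorem pentagonalSeries_eq_theta : pentagonalSeries (ZMod 2) = theta 24 := by
  have range_iff (n : ℕ) : n ∈ Set.range pentagonal ↔ IsSquare (24 * n + 1) := by
    constructor
    · rintro ⟨k, rfl⟩
      refine ⟨(6 * k - 1).natAbs, ?_⟩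
      zify
      rw [abs_mul_abs_self]
      linear_combination 12 * two_mul_natCast_pentagonal k
    · rintro ⟨x, hx⟩
      have hcop : Odd x ∧ ¬ 3 ∣ x := by
        rw [← sq_modEq_one_twentyFour_iff, sq, ← hx]
        simp [Nat.ModEq]
      zify at hx
      obtain ⟨j, hj | hj⟩ : ∃ j : ℤ, (x : ℤ) = 6 * j + 1 ∨ (x : ℤ) = 6 * j - 1 :=
        ⟨(x + 1) / 6, by rw [Nat.odd_iff] at hcop; omega⟩
      · refine ⟨-j, ?_⟩
        have h := two_mul_natCast_pentagonal_neg j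
        rw [hj] at hx
        zify
        linarith
      · refine ⟨j, ?_⟩
        have h := two_mul_natCast_pentagonal j
        rw [hj] at hx
        zify
        linarith
  ext n
  rw [coeff_theta]
  split_ifs with h
  · have hne : coeff n (pentagonalSeries (ZMod 2)) ≠ 0 := fun h0 ↦
      (coeff_pentagonalSeries_eq_zero_iff _).mp h0 ((range_iff n).mpr h)
    exact Fin.eq_one_of_ne_zero _ hne
  · exact coeff_pentagonalSeries_eq_zero _ (mt (range_iff n).mp h)

theorem theta_twentyFour_mul_theta_eight : theta 24 * theta 8 = theta 24 ^ 4 := by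
  ext n
  have hleft := coeff_expand_theta_mul_expand_theta (A := 1) (B := 3) (s := 24) (c := 24) (d := 8)
    one_pos three_pos (by norm_num) (by norm_num) (by norm_num) one_ne_zero one_ne_zero rfl rfl n
  have hnot : ¬ IsSquare (3 * (6 * n + 1)) := by
    rw [isSquare_prime_mul_iff Nat.prime_three]
    omega
  have hodd : Odd (6 * n + 1) := ⟨3 * n, by ring⟩
  have hsquare : IsSquare (6 * n + 1) ↔ ∃ a, 4 * a = n ∧ IsSquare (24 * a + 1) :=
    isSquare_mul_add_one_iff (by omega) hodd
  have hfilter : {z ∈ reps 1 3 (24 * n + 1 + 3) | z.1 ^ 2 ≡ 1 [MOD 24] ∧ z.2 ^ 2 ≡ 1 [MOD 8]} =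
      {z ∈ reps 1 3 (4 * (6 * n + 1)) | Odd z.1 ∧ Odd z.2} := by
    rw [show 24 * n + 1 + 3 = 4 * (6 * n + 1) by ring]
    refine filter_congr fun z hz ↦ ?_
    rw [mem_reps one_pos three_pos] at hz
    have h3 : ¬ 3 ∣ z.1 := fun h ↦ by
      have := dvd_pow h two_ne_zero
      omega
    rw [sq_modEq_one_twentyFour_iff, sq_modEq_one_eight_iff, and_iff_left h3]
  rw [expand_one_apply, expand_one_apply, hfilter, natCast_card_reps_odd hodd,
    if_neg hnot, add_zero] at hleft
  rw [hleft, ← expand_four, coeff_expand_theta _ _ _ hsquare]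

theorem theta_eight : theta 8 = theta 24 ^ 3 :=
  mul_left_cancel₀ (theta_ne_zero 24) (theta_twentyFour_mul_theta_eight.trans (by ring))

theorem theta_eight_mul_expand_three : theta 8 * expand 3 three_ne_zero (theta 8) =
    theta 8 ^ 4 + X * expand 3 three_ne_zero (theta 8) ^ 4 := by
  ext n
  have hleft := coeff_expand_theta_mul_expand_theta (A := 1) (B := 3) (s := 8) (c := 8) (d := 8)
    one_pos three_pos (by norm_num) (by norm_num) (by norm_num) one_ne_zero three_ne_zero rfl rfl n
  have hodd : Odd (2 * n + 1) := ⟨n, rfl⟩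
  have hsquare : IsSquare (2 * n + 1) ↔ ∃ a, 4 * a = n ∧ IsSquare (8 * a + 1) :=
    isSquare_mul_add_one_iff (by omega) hodd
  have htriple : IsSquare (3 * (2 * n + 1)) ↔ ∃ a, 12 * a + 1 = n ∧ IsSquare (8 * a + 1) := by
    rw [isSquare_prime_mul_iff Nat.prime_three]
    constructor
    · rintro ⟨b, hb, h⟩
      have h8 := mod_eight_eq_one_of_isSquare h (Nat.odd_mul.mp (hb ▸ hodd)).2
      obtain ⟨a, rfl⟩ : ∃ a, b = 8 * a + 1 := ⟨b / 8, by omega⟩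
      exact ⟨a, by omega, h⟩
    · rintro ⟨a, rfl, h⟩
      exact ⟨8 * a + 1, by ring, h⟩
  rw [show 8 * n + 1 + 3 = 4 * (2 * n + 1) by ring] at hleft
  simp only [sq_modEq_one_eight_iff] at hleft
  rw [expand_one_apply, natCast_card_reps_odd hodd] at hleft
  rw [hleft, map_add, ← expand_four, ← expand_four, ← expand_mul,
    coeff_expand_theta _ _ _ hsquare, coeff_X_mul_expand_theta _ _ _ htriple]

theorem isSquare_three_mul_add_one_iff_of_even {n : ℕ} (h : Even (3 * n + 1)) :
    IsSquare (3 * n + 1) ↔ ∃ b, 4 * b + 1 = n ∧ IsSquare (3 * b + 1) := by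
  constructor
  · rintro ⟨x, hx⟩
    obtain ⟨y, rfl⟩ : Even x := by simpa [hx, Nat.even_mul] using h
    have hy : 3 * n + 1 = 4 * (y * y) := by rw [hx]; ring
    exact ⟨n / 4, by omega, y, by omega⟩
  · rintro ⟨b, rfl, y, hy⟩
    exact ⟨2 * y, by linarith⟩

theorem theta_three_eq_add : theta 3 = theta 24 ^ 8 + X * theta 3 ^ 4 := by
  classical
  ext n
  rw [map_add, ← expand_eight, ← expand_four, coeff_expand_theta _ _ _ Iff.rfl,
    coeff_X_mul_expand_theta _ _ _ Iff.rfl, coeff_theta]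
  obtain h | h := Nat.even_or_odd (3 * n + 1)
  · rw [if_neg (c := ∃ a, 8 * a = n ∧ _), zero_add]
    · simp only [isSquare_three_mul_add_one_iff_of_even h]
    · rintro ⟨a, rfl, -⟩
      rw [Nat.even_iff] at h
      omega
  · rw [if_neg (c := ∃ b, 4 * b + 1 = n ∧ _), add_zero]
    · simp only [isSquare_mul_add_one_iff (k := 8) (by omega) h, Nat.reduceMul]
    · rintro ⟨b, rfl, -⟩
      rw [Nat.odd_iff] at h
      omega

theorem theta_three_mul_theta_twentyFour :
    theta 3 * theta 24 = expand 3 three_ne_zero (theta 8) := by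
  set ψ := expand 3 three_ne_zero (theta 8)
  set D := theta 3 * theta 24 - ψ with hD
  by_contra hne
  have hD0 : D ≠ 0 := sub_ne_zero.mpr hne
  have hchar : D ^ 4 = (theta 3 * theta 24) ^ 4 - ψ ^ 4 := by
    rw [hD, ← expand_four, map_sub, expand_four, expand_four]
  have hmul : D * theta 8 = D * (X * D ^ 3) := by
    linear_combination theta 3 * theta_twentyFour_mul_theta_eight +
      theta 24 ^ 4 * theta_three_eq_add - theta_eight_mul_expand_three - X * hchar -
      congrArg (· ^ 4) theta_eight
  have := congrArg constantCoeff (mul_left_cancel₀ hD0 hmul)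
  simp [constantCoeff_theta] at this

theorem coeff_four_mul_add_one_expand_theta_mul_theta_eight (n : ℕ) :
    coeff (4 * n + 1) (expand 21 (by norm_num) (theta 24) * theta 8) =
      coeff n (expand 3 three_ne_zero (theta 24) ^ 4) := by
  have hleft := coeff_expand_theta_mul_expand_theta (A := 7) (B := 1) (s := 8) (c := 24) (d := 8)
    (k := 21) (l := 1) (by norm_num) one_pos (by norm_num) (by norm_num) (by norm_num)
    (by norm_num) one_ne_zero rfl rfl (4 * n + 1)
  have hodd : Odd (2 * n + 1) := ⟨n, rfl⟩
  have hsquare : IsSquare (2 * n + 1) ∧ ¬ 3 ∣ 2 * n + 1 ↔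
      ∃ a, 12 * a = n ∧ IsSquare (24 * a + 1) := by
    constructor
    · rintro ⟨⟨x, hx⟩, h3⟩
      have hx' : x ^ 2 ≡ 1 [MOD 24] := by
        rw [sq_modEq_one_twentyFour_iff]
        exact ⟨(Nat.odd_mul.mp (hx ▸ hodd)).1, fun h ↦ h3 (hx ▸ h.mul_right x)⟩
      rw [sq, ← hx, Nat.ModEq] at hx'
      obtain ⟨a, rfl⟩ : 12 ∣ n := by omega
      exact ⟨a, rfl, x, by rw [← hx]; ring⟩
    · rintro ⟨a, rfl, h⟩
      rw [← mul_assoc]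
      exact ⟨h, by omega⟩
  rw [show 8 * (4 * n + 1) + 7 + 1 = 16 * (2 * n + 1) by ring] at hleft
  simp only [sq_modEq_one_eight_iff, sq_modEq_one_twentyFour_iff, and_right_comm] at hleft
  rw [expand_one_apply, natCast_card_reps_seven hodd] at hleft
  rw [hleft, ← expand_four, ← expand_mul, coeff_expand_theta _ _ _ hsquare]

end Theta

section RegularPartitions

open Finset PowerSeries

theorem mk_b21_mul_theta : mk (fun n ↦ (b21 n : ZMod 2)) * theta 24 =
    expand 21 (by norm_num) (theta 24) := by
  rw [← pentagonalSeries_eq_theta]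
  exact mk_card_restricted_mul_pentagonalSeries (by norm_num)

theorem mk_b21_four_mul_add_one : mk (fun n ↦ (b21 (4 * n + 1) : ZMod 2)) =
    theta 3 * expand 3 three_ne_zero (theta 24) := by
  have hsection : mk (fun n ↦ (b21 (4 * n + 1) : ZMod 2)) * theta 24 =
      expand 3 three_ne_zero (theta 24) ^ 4 := by
    ext n
    rw [← coeff_four_mul_add_one_expand_theta_mul_theta_eight, ← mk_b21_mul_theta,
      theta_eight, mul_assoc, ← pow_succ', ← expand_four, coeff_mul_expand _ (by norm_num)]
    simp only [coeff_mk]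
  apply mul_right_cancel₀ (theta_ne_zero 24)
  calc mk (fun n ↦ (b21 (4 * n + 1) : ZMod 2)) * theta 24
    _ = expand 3 three_ne_zero (theta 8) * expand 3 three_ne_zero (theta 24) := by
      rw [hsection, theta_eight, map_pow, ← pow_succ]
    _ = theta 3 * expand 3 three_ne_zero (theta 24) * theta 24 := by
      rw [← theta_three_mul_theta_twentyFour, mul_right_comm]

theorem natCast_b21_four_mul_add_one (m : ℕ) :
    (b21 (4 * m + 1) : ZMod 2) = #{z ∈ reps 8 3 (24 * m + 11) | ¬ 3 ∣ z.2} := by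
  have hcoeff := coeff_expand_theta_mul_expand_theta (A := 8) (B := 3) (s := 24) (c := 3) (d := 24)
    (by norm_num) three_pos (by norm_num) (by norm_num) (by norm_num) one_ne_zero three_ne_zero
    rfl rfl m
  rw [expand_one_apply, ← mk_b21_four_mul_add_one, coeff_mk] at hcoeff
  rw [hcoeff]
  congr 2
  refine filter_congr fun z hz ↦ ?_
  rw [mem_reps (by norm_num) three_pos] at hz
  have hx : ¬ 3 ∣ z.1 := fun h ↦ by
    have := dvd_pow h two_ne_zero
    omega
  have hy : Odd z.2 := by
    rw [← Nat.odd_pow_iff two_ne_zero, Nat.odd_iff]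
    omega
  rw [sq_modEq_one_three_iff, sq_modEq_one_twentyFour_iff, and_iff_right hx, and_iff_right hy]

theorem even_b21_of_dvd_of_not_sq_dvd {p : ℕ} (hp : p.Prime) (h24 : ¬ p ∣ 24)
    (hsol : ∃ j ∈ ({1, 4, 8} : Set ℤ), ∃ x y : ℤ,
      8 * x ^ 2 + 27 * y ^ 2 = j * p ∧ Int.gcd x y = 1)
    {m : ℕ} (hm : p ∣ 24 * m + 11) (hm' : ¬ p ^ 2 ∣ 24 * m + 11) : Even (b21 (4 * m + 1)) := by
  have hp2 : p ≠ 2 := by rintro rfl; norm_num at h24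
  have hp3 : 3 ≠ p := by rintro rfl; norm_num at h24
  obtain ⟨c, e, hc, he3, hpe⟩ := exists_sq_add_eq_sq hp h24 hsol
  rw [← ZMod.natCast_eq_zero_iff_even, natCast_b21_four_mul_add_one,
    ZMod.natCast_eq_zero_iff_even]
  exact even_card_reps (by norm_num) three_pos hp hp2 h24 (c := c) (by push_cast; linarith) hpe
    hm hm' Nat.prime_three (by norm_num) dvd_rfl he3 hp3 (by omega)

end RegularPartitions

section Progression

variable {p : ℕ} {r t : ℤ}

theorem exists_sq_add_sub_one_eq (hp : p.Prime) (h24 : ¬ p ∣ 24)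
    (hr : 24 * r ≡ 1 [ZMOD (p : ℤ)]) : ∃ t : ℤ, (p : ℤ) ^ 2 + 24 * r - 1 = 24 * p * t := by
  have hsq : p ^ 2 ≡ 1 [MOD 24] := by
    refine sq_modEq_one_twentyFour_iff.mpr ⟨hp.odd_of_ne_two ?_, fun h ↦ ?_⟩
    · rintro rfl
      norm_num at h24
    · obtain rfl := (Nat.prime_dvd_prime_iff_eq Nat.prime_three hp).mp h
      norm_num at h24
  have hcop : IsCoprime (24 : ℤ) p :=
    Nat.isCoprime_iff_coprime.mpr ((hp.coprime_iff_not_dvd.mpr h24).symm)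
  refine hcop.mul_dvd ?_ ?_
  · have h := hsq.symm.dvd
    push_cast at h
    omega
  · rw [add_sub_assoc]
    exact dvd_add (dvd_pow_self _ two_ne_zero) hr.symm.dvd

theorem nonneg_and_mul_lt_of_sq_add_sub_one_eq (hr1 : 1 ≤ -r) (hr2 : -r ≤ (p : ℤ) - 1)
    (ht : (p : ℤ) ^ 2 + 24 * r - 1 = 24 * p * t) : 0 ≤ t ∧ 24 * t < p := by
  constructor <;> nlinarith

theorem sq_dvd_iff_of_sq_add_sub_one_eq (hp : p.Prime) (h24 : ¬ p ∣ 24) (hr1 : 1 ≤ -r)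
    (hr2 : -r ≤ (p : ℤ) - 1) (ht : (p : ℤ) ^ 2 + 24 * r - 1 = 24 * p * t) {β : ℤ} (hβ0 : 0 ≤ β)
    (hβp : β < p) (n : ℤ) :
    (p : ℤ) ^ 2 ∣ 24 * (p ^ 2 * n + β * p - 11 * r) + 11 ↔ β = 11 * t := by
  have hp0 : (p : ℤ) ≠ 0 := Nat.cast_ne_zero.mpr hp.ne_zero
  have h24' : ¬ (p : ℤ) ∣ 24 := mod_cast h24
  obtain ⟨ht0, htp⟩ := nonneg_and_mul_lt_of_sq_add_sub_one_eq hr1 hr2 ht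
  have hsplit : 24 * (p ^ 2 * n + β * p - 11 * r) + 11 =
      p ^ 2 * (24 * n + 11) + p * (24 * (β - 11 * t)) := by
    linear_combination -11 * ht
  rw [hsplit, dvd_add_right (dvd_mul_right _ _), sq, mul_dvd_mul_iff_left hp0,
    (Nat.prime_iff_prime_int.mp hp).dvd_mul, or_iff_right h24']
  constructor
  · intro h
    have := Int.eq_zero_of_abs_lt_dvd h (abs_lt.mpr ⟨by omega, by omega⟩)
    omega
  · rintro rfl
    simp

end Progression

theorem stmt_0 (p : ℕ) (hp : p.Prime) (hodd : Odd p)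
    (hsol : ∃ j ∈ ({1, 4, 8} : Set ℤ), ∃ x y : ℤ,
      8 * x ^ 2 + 27 * y ^ 2 = j * p ∧ Int.gcd x y = 1)
    (r : ℤ) (hr : 24 * r ≡ 1 [ZMOD (p : ℤ)]) (hr1 : 1 ≤ -r) (hr2 : -r ≤ (p : ℤ) - 1)
    (n : ℕ) (β : ℤ) (hβ0 : 0 ≤ β) (hβp : β < (p : ℤ))
    (hβne : 24 * (p : ℤ) * β ≠ 11 * ((p : ℤ) ^ 2 + 24 * r - 1))
    (N : ℕ) (hN : (N : ℤ) = 4 * ((p : ℤ) ^ 2 * n + β * p - 11 * r) + 1) :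
    b21 N % 2 = 0 := by
  have h24 : ¬ p ∣ 24 := fun h ↦ by
    have h1 : (p : ℤ) ∣ 1 := hr.dvd_iff.mp ((Int.natCast_dvd_natCast.mpr h).mul_right r)
    exact hp.one_lt.ne' (Nat.dvd_one.mp (mod_cast h1))
  obtain ⟨t, ht⟩ := exists_sq_add_sub_one_eq hp h24 hr
  have hβ : β ≠ 11 * t := by
    rintro rfl
    exact hβne (by linear_combination -11 * ht)
  obtain ⟨m, hm⟩ : ∃ m : ℕ, (p : ℤ) ^ 2 * n + β * p - 11 * r = m :=
    Int.eq_ofNat_of_zero_le (by nlinarith [mul_nonneg hβ0 p.cast_nonneg, sq_nonneg (p : ℤ)])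
  have hdvd : p ∣ 24 * m + 11 := by
    zify
    rw [← hm]
    exact ⟨p * (24 * n + 11) + 24 * (β - 11 * t), by linear_combination -11 * ht⟩
  have hndvd : ¬ p ^ 2 ∣ 24 * m + 11 := by
    zify
    rwa [← hm, sq_dvd_iff_of_sq_add_sub_one_eq hp h24 hr1 hr2 ht hβ0 hβp]
  rw [hm] at hN
  obtain rfl : N = 4 * m + 1 := mod_cast hN
  exact Nat.even_iff.mp (even_b21_of_dvd_of_not_sq_dvd hp h24 hsol hdvd hndvd)
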